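/- (Fefferman–Stein vector-valued maximal inequality, interval case) Let $1 < p < \infty$ and $1 \le q < \min\{2, p\}$. Then for any sequence $(g_k)_{k\ge 1}$ of measurable functions on $[0,1)$, $\Big\| \Big( \sum_{k=1}^\infty \mathcal{M}_q(g_k)^2 \Big)^{1/2} \Big\|_{L^p(0,1)} \le C_{p,q} \Big\| \Big( \sum_{k=1}^\infty |g_k|^2 \Big)^{1/2} \Big\|_{L^p(0,1)}$. -/

import Mathlib

open MeasureTheory Set

noncomputable section

/-- The `q`-maximal function over open subintervals of `[0,1)`. -/
def MMq (q : ℝ) (f : ℝ → ℝ) (x : ℝ) : ℝ :=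
  sSup {y | ∃ a b : ℝ, 0 ≤ a ∧ a < x ∧ x < b ∧ b ≤ 1 ∧
    y = ((b - a)⁻¹ * ∫ t in Set.Ioo a b, |f t| ^ q) ^ (1 / q)}

/-!
Cover the level set `{c < M f}` of the uncentered maximal function by balls on which `f` has average
greater than `c`, and let `B` run through a disjoint Vitali subfamily. On `B` the function `M u` is
at least the average of `u` over an enlargement of `B`, so the doubling property gives the weighted
weak type estimate `c * ∫ u over {c < M f} ≤ K ^ 3 * ∫ f * M u`. Truncating `f` at height `c / 2`
and integrating over `c` turns it into `∫ (M f) ^ r * u ≤ C * ∫ f ^ r * M u` for `1 < r`, with a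
constant that does not depend on the weight `u`; this inequality can be summed over a family `fₖ`.

For `1 < θ`, testing `∑ₖ (M fₖ) ^ r` against `u` and bounding the norm of `M u` in the dual exponent
gives the estimate in `L ^ θ`. For `θ ≤ 1`, put `W = (∑ₖ fₖ ^ r) ^ (1 / r)` and factor
`fₖ ≤ gₖ ^ θ * W ^ (1 - θ)` with `∑ₖ gₖ ^ (r * θ) ≤ W ^ (r * θ)`. By Hölder on each ball,
`M fₖ ≤ (M gₖ) ^ θ * (M W) ^ (1 - θ)`, and a second use of Hölder leaves only the scalar inequality
with exponent `r * θ > 1` for the `gₖ` and for `W`. Finally `MMq q g` is dominated by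
`(M (|g| ^ q)) ^ (1 / q)`, which leads to `r = s / q` and `θ = p / s` for values in `ℓ ^ s`.
-/

open Metric
open scoped ENNReal NNReal

section LayerCake

variable {α β : Type*} [MeasurableSpace α] [MeasurableSpace β] {ν : Measure α} {σ : Measure β}

lemma lintegral_Ioi_ofReal_rpow_eq_top (s : ℝ) :
    ∫⁻ t in Ioi (0 : ℝ), ENNReal.ofReal (t ^ s) = ∞ := by
  by_contra h
  refine not_integrableOn_Ioi_rpow s ((lintegral_ofReal_ne_top_iff_integrable ?_ ?_).1 h)
  · exact (by fun_prop : Measurable fun t : ℝ => t ^ s).aestronglyMeasurable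
  · exact (ae_restrict_mem measurableSet_Ioi).mono fun t ht => Real.rpow_nonneg (le_of_lt ht) s

lemma lintegral_rpow_eq_lintegral_meas_ofReal_lt_mul {g : α → ℝ≥0∞} (hg : Measurable g) {s : ℝ}
    (hs : 0 < s) :
    ∫⁻ x, g x ^ s ∂ν = ENNReal.ofReal s *
      ∫⁻ t in Ioi (0 : ℝ), ν {x | ENNReal.ofReal t < g x} * ENNReal.ofReal (t ^ (s - 1)) := by
  by_cases hfin : ∀ᵐ x ∂ν, g x ≠ ∞
  · calc ∫⁻ x, g x ^ s ∂ν
        = ∫⁻ x, ENNReal.ofReal ((g x).toReal ^ s) ∂ν := by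
          refine lintegral_congr_ae (hfin.mono fun x hx => ?_)
          beta_reduce
          rw [← ENNReal.ofReal_rpow_of_nonneg ENNReal.toReal_nonneg hs.le, ENNReal.ofReal_toReal hx]
      _ = ENNReal.ofReal s * ∫⁻ t in Ioi (0 : ℝ),
            ν {x | t < (g x).toReal} * ENNReal.ofReal (t ^ (s - 1)) :=
          lintegral_rpow_eq_lintegral_meas_lt_mul ν (.of_forall fun _ => ENNReal.toReal_nonneg)
            hg.ennreal_toReal.aemeasurable hs
      _ = _ := by
          congr 1
          refine setLIntegral_congr_fun measurableSet_Ioi fun t ht => ?_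
          congr 1
          refine measure_congr (hfin.mono fun x hx => propext ?_)
          exact (ENNReal.ofReal_lt_iff_lt_toReal (le_of_lt ht) hx).symm
  · have htop : ν {x | g x = ∞} ≠ 0 := by simpa [ae_iff] using hfin
    have hle : ν {x | g x = ∞} * ∫⁻ t in Ioi (0 : ℝ), ENNReal.ofReal (t ^ (s - 1)) ≤
        ∫⁻ t in Ioi (0 : ℝ), ν {x | ENNReal.ofReal t < g x} * ENNReal.ofReal (t ^ (s - 1)) := by
      rw [← lintegral_const_mul _ (by fun_prop)]
      gcongr with t x
      exact fun hx : g x = ∞ => hx ▸ ENNReal.ofReal_lt_top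
    rw [lintegral_Ioi_ofReal_rpow_eq_top, ENNReal.mul_top htop, top_le_iff] at hle
    rw [hle, ENNReal.mul_top (by simpa using hs)]
    refine lintegral_eq_top_of_measure_eq_top_ne_zero (hg.pow_const s).aemeasurable ?_
    simpa only [ENNReal.rpow_eq_top_iff_of_pos hs] using htop

lemma lintegral_rpow_le_of_forall_ofReal_mul_meas_lt_le {g : α → ℝ≥0∞} {h : β → ℝ≥0∞}
    (hg : Measurable g) (hh : Measurable h) {A : ℝ≥0} {r : ℝ} (hr : 1 < r)
    (H : ∀ t : ℝ, 0 < t → ENNReal.ofReal t * ν {x | ENNReal.ofReal t < g x} ≤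
      A * σ {x | ENNReal.ofReal t < h x}) :
    ∫⁻ x, g x ^ r ∂ν ≤ A * ENNReal.ofReal (r / (r - 1)) * ∫⁻ x, h x ^ (r - 1) ∂σ := by
  have hr0 : 0 < r := one_pos.trans hr
  have hr1 : 0 < r - 1 := sub_pos.2 hr
  have hlevel : ∀ t ∈ Ioi (0 : ℝ),
      ν {x | ENNReal.ofReal t < g x} * ENNReal.ofReal (t ^ (r - 1)) ≤
        A * (σ {x | ENNReal.ofReal t < h x} * ENNReal.ofReal (t ^ (r - 1 - 1))) := by
    intro t ht
    rw [mem_Ioi] at ht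
    have hpow : ENNReal.ofReal (t ^ (r - 1)) =
        ENNReal.ofReal t * ENNReal.ofReal (t ^ (r - 1 - 1)) := by
      rw [← ENNReal.ofReal_mul ht.le, Real.rpow_sub_one ht.ne' (r - 1), mul_div_cancel₀ _ ht.ne']
    rw [hpow, ← mul_assoc, mul_comm (ν _), ← mul_assoc]
    gcongr ?_ * _
    exact H t ht
  rw [lintegral_rpow_eq_lintegral_meas_ofReal_lt_mul hg hr0,
    lintegral_rpow_eq_lintegral_meas_ofReal_lt_mul hh hr1]
  calc _ ≤ ENNReal.ofReal r * ∫⁻ t in Ioi (0 : ℝ),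
          A * (σ {x | ENNReal.ofReal t < h x} * ENNReal.ofReal (t ^ (r - 1 - 1))) := by
        gcongr _ * ?_
        exact setLIntegral_mono' measurableSet_Ioi hlevel
    _ = _ := by
        rw [lintegral_const_mul' _ _ ENNReal.coe_ne_top,
          ← div_mul_cancel₀ r hr1.ne', ENNReal.ofReal_mul (by positivity),
          div_mul_cancel₀ r hr1.ne']
        ring

end LayerCake

section Duality

variable {α : Type*} [MeasurableSpace α] {μ : Measure α}

lemma ennreal_le_rpow_of_le_mul_rpow {θ θ' : ℝ} (hθ : θ.HolderConjugate θ') {a b : ℝ≥0∞}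
    (ha : a ≠ ∞) (h : a ≤ b * a ^ (1 / θ')) : a ≤ b ^ θ := by
  rcases eq_or_ne a 0 with rfl | ha0
  · exact zero_le
  have hsplit : a ^ (1 / θ) * a ^ (1 / θ') = a := by
    rw [← ENNReal.rpow_add _ _ ha0 ha, one_div, one_div, hθ.inv_add_inv_eq_one, ENNReal.rpow_one]
  have hroot : a ^ (1 / θ) ≤ b := by
    rwa [← ENNReal.mul_le_mul_iff_left (c := a ^ (1 / θ')) (by simp [ha0, ha])
      (ENNReal.rpow_ne_top_of_nonneg hθ.symm.one_div_nonneg ha), hsplit]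
  rwa [one_div, ENNReal.rpow_inv_le_iff hθ.pos] at hroot

lemma lintegral_le_of_forall_simpleFunc_le [SigmaFinite μ] {f : α → ℝ≥0∞} {b : ℝ≥0∞}
    (h : ∀ φ : SimpleFunc α ℝ≥0, (∀ x, (φ x : ℝ≥0∞) ≤ f x) → ∫⁻ x, φ x ∂μ ≠ ∞ →
      ∫⁻ x, φ x ∂μ ≤ b) : ∫⁻ x, f x ∂μ ≤ b := by
  rw [lintegral_eq_nnreal]
  refine iSup₂_le fun φ hφ => le_of_forall_lt fun c hc => ?_
  rw [← SimpleFunc.lintegral_eq_lintegral] at hc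
  obtain ⟨ψ, hψφ, hψ, hcψ⟩ := SimpleFunc.exists_lt_lintegral_simpleFunc_of_lt_lintegral hc
  exact hcψ.trans_le (h ψ (fun x => (ENNReal.coe_le_coe.2 (hψφ x)).trans (hφ x)) hψ.ne)

lemma lintegral_rpow_le_of_forall_lintegral_mul_le [SigmaFinite μ] {θ θ' : ℝ}
    (hθ : θ.HolderConjugate θ') {f : α → ℝ≥0∞} {b : ℝ≥0∞}
    (h : ∀ u : α → ℝ≥0∞, Measurable u → ∫⁻ x, f x * u x ∂μ ≤ b * (∫⁻ x, u x ^ θ' ∂μ) ^ (1 / θ')) :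
    ∫⁻ x, f x ^ θ ∂μ ≤ b ^ θ := by
  refine lintegral_le_of_forall_simpleFunc_le fun φ hφ hφfin => ?_
  refine ennreal_le_rpow_of_le_mul_rpow hθ hφfin ?_
  calc ∫⁻ x, φ x ∂μ
      ≤ ∫⁻ x, f x * (φ x : ℝ≥0∞) ^ (1 / θ') ∂μ := by
        refine lintegral_mono fun x => ?_
        have hroot : (φ x : ℝ≥0∞) ^ (1 / θ) ≤ f x := by
          rw [one_div, ENNReal.rpow_inv_le_iff hθ.pos]
          exact hφ x
        calc (φ x : ℝ≥0∞) = (φ x : ℝ≥0∞) ^ (1 / θ) * (φ x : ℝ≥0∞) ^ (1 / θ') := by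
              rw [← ENNReal.rpow_add_of_nonneg _ _ hθ.one_div_nonneg hθ.symm.one_div_nonneg,
                one_div, one_div, hθ.inv_add_inv_eq_one, ENNReal.rpow_one]
          _ ≤ f x * (φ x : ℝ≥0∞) ^ (1 / θ') := by gcongr
    _ ≤ b * (∫⁻ x, ((φ x : ℝ≥0∞) ^ (1 / θ')) ^ θ' ∂μ) ^ (1 / θ') :=
        h _ (φ.measurable.coe_nnreal_ennreal.pow_const _)
    _ = b * (∫⁻ x, φ x ∂μ) ^ (1 / θ') := by
        simp only [one_div, ENNReal.rpow_inv_rpow hθ.symm.ne_zero]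

end Duality

section MaximalFunction

variable {X : Type*} [PseudoMetricSpace X] [MeasurableSpace X] {μ : Measure X}
  {f g u : X → ℝ≥0∞} {x : X} {c : ℝ≥0∞}

/-- The uncentered Hardy–Littlewood maximal function: the supremum of the averages of `f` over the
open balls containing `x`. The centre and radius range freely, so that on the real line these are
the open intervals containing `x`. -/
def maximalFunction (μ : Measure X) (f : X → ℝ≥0∞) (x : X) : ℝ≥0∞ :=
  ⨆ (z : X) (ρ : ℝ) (_ : x ∈ ball z ρ), ⨍⁻ y in ball z ρ, f y ∂μ

lemma setLAverage_ball_le_maximalFunction {z : X} {ρ : ℝ} (hx : x ∈ ball z ρ) :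
    ⨍⁻ y in ball z ρ, f y ∂μ ≤ maximalFunction μ f x :=
  le_iSup_of_le z (le_iSup_of_le ρ (le_iSup_of_le hx le_rfl))

lemma maximalFunction_le (h : ∀ z ρ, x ∈ ball z ρ → ⨍⁻ y in ball z ρ, f y ∂μ ≤ c) :
    maximalFunction μ f x ≤ c :=
  iSup_le fun z => iSup_le fun ρ => iSup_le (h z ρ)

lemma setOf_lt_maximalFunction (μ : Measure X) (f : X → ℝ≥0∞) (c : ℝ≥0∞) :
    {x | c < maximalFunction μ f x} =
      ⋃ i ∈ {i : X × ℝ | c < ⨍⁻ y in ball i.1 i.2, f y ∂μ}, ball i.1 i.2 := by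
  ext x
  simp only [maximalFunction, mem_ofPred_eq, lt_iSup_iff, exists_prop, mem_iUnion, Prod.exists]
  exact exists₂_congr fun _ _ => and_comm

lemma isOpen_setOf_lt_maximalFunction (μ : Measure X) (f : X → ℝ≥0∞) (c : ℝ≥0∞) :
    IsOpen {x | c < maximalFunction μ f x} := by
  rw [setOf_lt_maximalFunction]
  exact isOpen_biUnion fun _ _ => isOpen_ball

@[fun_prop]
lemma measurable_maximalFunction [OpensMeasurableSpace X] (μ : Measure X) (f : X → ℝ≥0∞) :
    Measurable (maximalFunction μ f) :=
  measurable_of_Ioi fun c => (isOpen_setOf_lt_maximalFunction μ f c).measurableSet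

lemma maximalFunction_mono (h : f ≤ g) : maximalFunction μ f ≤ maximalFunction μ g := fun _ =>
  maximalFunction_le fun _ _ hx =>
    (setLAverage_mono_ae _ (.of_forall h)).trans (setLAverage_ball_le_maximalFunction hx)

lemma maximalFunction_const_le (μ : Measure X) (c : ℝ≥0∞) (x : X) :
    maximalFunction μ (fun _ => c) x ≤ c := by
  refine maximalFunction_le fun z ρ _ => ?_
  rw [setLAverage_eq, setLIntegral_const]
  exact ENNReal.div_le_of_le_mul le_rfl

lemma maximalFunction_add_le (hf : Measurable f) (g : X → ℝ≥0∞) (x : X) :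
    maximalFunction μ (fun y => f y + g y) x ≤ maximalFunction μ f x + maximalFunction μ g x := by
  refine maximalFunction_le fun z ρ hx => ?_
  calc ⨍⁻ y in ball z ρ, f y + g y ∂μ
      = ⨍⁻ y in ball z ρ, f y ∂μ + ⨍⁻ y in ball z ρ, g y ∂μ := lintegral_add_left hf g
    _ ≤ maximalFunction μ f x + maximalFunction μ g x := by
        gcongr <;> exact setLAverage_ball_le_maximalFunction hx

lemma maximalFunction_rpow_mul_rpow_le (hf : Measurable f) (hg : Measurable g) {s t : ℝ}
    (hs : 0 ≤ s) (ht : 0 ≤ t) (hst : s + t = 1) (x : X) :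
    maximalFunction μ (fun y => f y ^ s * g y ^ t) x ≤
      maximalFunction μ f x ^ s * maximalFunction μ g x ^ t := by
  refine maximalFunction_le fun z ρ hx => ?_
  calc ⨍⁻ y in ball z ρ, f y ^ s * g y ^ t ∂μ
      ≤ (⨍⁻ y in ball z ρ, f y ∂μ) ^ s * (⨍⁻ y in ball z ρ, g y ∂μ) ^ t :=
        ENNReal.lintegral_mul_norm_pow_le hf.aemeasurable hg.aemeasurable hs ht hst
    _ ≤ maximalFunction μ f x ^ s * maximalFunction μ g x ^ t := by
        gcongr <;> exact setLAverage_ball_le_maximalFunction hx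

end MaximalFunction

section Doubling

variable {X : Type*} [PseudoMetricSpace X]

/-- Vitali's lemma enlarges closed balls by a factor `4`; passing to `8` makes room for open balls
and keeps the factor a power of two, as doubling requires. -/
lemma exists_pairwiseDisjoint_biUnion_ball_subset (S : Finset (X × ℝ))
    (hS : ∀ i ∈ S, 0 < i.2) :
    ∃ v ⊆ S, (v : Set (X × ℝ)).PairwiseDisjoint (fun i => ball i.1 i.2) ∧
      ⋃ i ∈ S, ball i.1 i.2 ⊆ ⋃ i ∈ v, ball i.1 (8 * i.2) := by
  obtain ⟨R, hR⟩ := (S.image Prod.snd).bddAbove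
  obtain ⟨v, hvS, hdisj, hcover⟩ :=
    Vitali.exists_disjoint_subfamily_covering_enlargement_closedBall (S : Set (X × ℝ))
      Prod.fst Prod.snd R (fun i hi => hR (Finset.mem_coe.2 (Finset.mem_image_of_mem _ hi)))
      4 (by norm_num)
  lift v to Finset (X × ℝ) using S.finite_toSet.subset hvS
  refine ⟨v, Finset.coe_subset.1 hvS, hdisj.mono fun _ => ball_subset_closedBall,
    iUnion₂_subset fun i hi y hy => ?_⟩
  obtain ⟨j, hj, hij⟩ := hcover i hi
  have hyj : dist y j.1 ≤ 4 * j.2 := hij (ball_subset_closedBall hy)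
  refine mem_iUnion₂_of_mem hj (mem_ball.2 (hyj.trans_lt ?_))
  linarith [hS j (hvS hj)]

variable [MeasurableSpace X] {μ : Measure X} {K : ℝ≥0}

/-- A measure is doubling with constant `K` if doubling the radius of a ball multiplies its measure
by at most `K`. In contrast to `IsUnifLocDoublingMeasure` this is required at all scales, as the
supremum in `maximalFunction` runs over balls of all sizes. -/
def IsDoubling (μ : Measure X) (K : ℝ≥0) : Prop :=
  ∀ x r, μ (ball x (2 * r)) ≤ K * μ (ball x r)

lemma isDoubling_addHaar {E : Type*} [NormedAddCommGroup E] [NormedSpace ℝ E]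
    [FiniteDimensional ℝ E] [MeasurableSpace E] [BorelSpace E] (μ : Measure E)
    [μ.IsAddHaarMeasure] : IsDoubling μ (2 ^ Module.finrank ℝ E) := fun x r => by
  rw [Measure.addHaar_ball_mul_of_pos μ x two_pos, Measure.addHaar_ball_center μ x]
  simp

lemma IsDoubling.measure_ball_eight_mul_le (hμ : IsDoubling μ K) (x : X) (r : ℝ) :
    μ (ball x (8 * r)) ≤ K ^ 3 * μ (ball x r) :=
  calc μ (ball x (8 * r)) = μ (ball x (2 * (2 * (2 * r)))) := by ring_nf
    _ ≤ K * (K * (K * μ (ball x r))) := by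
        refine (hμ _ _).trans ?_
        gcongr
        refine (hμ _ _).trans ?_
        gcongr
        exact hμ _ _
    _ = K ^ 3 * μ (ball x r) := by ring

lemma IsDoubling.setLAverage_mul_setLIntegral_ball_le [OpensMeasurableSpace X]
    (hμ : IsDoubling μ K) (f u : X → ℝ≥0∞) (x : X) (ρ : ℝ) :
    (⨍⁻ y in ball x ρ, f y ∂μ) * ∫⁻ y in ball x (8 * ρ), u y ∂μ ≤
      K ^ 3 * ∫⁻ y in ball x ρ, f y * maximalFunction μ u y ∂μ := by
  rcases eq_or_ne (μ (ball x ρ)) ∞ with htop | hfin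
  · simp [setLAverage_eq, htop]
  have hfin8 : μ (ball x (8 * ρ)) ≠ ∞ :=
    ne_top_of_le_ne_top (ENNReal.mul_ne_top (by simp) hfin) (hμ.measure_ball_eight_mul_le x ρ)
  set a := ⨍⁻ y in ball x (8 * ρ), u y ∂μ
  have ha : ∀ y ∈ ball x ρ, a ≤ maximalFunction μ u y := fun y hy =>
    setLAverage_ball_le_maximalFunction
      (ball_subset_ball (by linarith [pos_of_mem_ball hy]) hy)
  calc (⨍⁻ y in ball x ρ, f y ∂μ) * ∫⁻ y in ball x (8 * ρ), u y ∂μ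
      = (⨍⁻ y in ball x ρ, f y ∂μ) * (μ (ball x (8 * ρ)) * a) := by
        rw [measure_mul_setLAverage u hfin8]
    _ ≤ (⨍⁻ y in ball x ρ, f y ∂μ) * (K ^ 3 * μ (ball x ρ) * a) := by
        gcongr
        exact hμ.measure_ball_eight_mul_le x ρ
    _ = K ^ 3 * ((μ (ball x ρ) * ⨍⁻ y in ball x ρ, f y ∂μ) * a) := by ring
    _ = K ^ 3 * ((∫⁻ y in ball x ρ, f y ∂μ) * a) := by rw [measure_mul_setLAverage f hfin]
    _ ≤ K ^ 3 * ∫⁻ y in ball x ρ, f y * a ∂μ := by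
        gcongr
        exact lintegral_mul_const_le _ _
    _ ≤ K ^ 3 * ∫⁻ y in ball x ρ, f y * maximalFunction μ u y ∂μ := by
        gcongr K ^ 3 * ?_
        refine setLIntegral_mono' measurableSet_ball fun y hy => ?_
        gcongr
        exact ha y hy

lemma IsDoubling.mul_withDensity_biUnion_ball_le [OpensMeasurableSpace X] (hμ : IsDoubling μ K)
    (f u : X → ℝ≥0∞) {c : ℝ≥0∞} (S : Finset (X × ℝ))
    (hS : ∀ i ∈ S, c < ⨍⁻ y in ball i.1 i.2, f y ∂μ) :
    c * μ.withDensity u (⋃ i ∈ S, ball i.1 i.2) ≤ K ^ 3 * ∫⁻ y, f y * maximalFunction μ u y ∂μ := by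
  have hpos : ∀ i ∈ S, 0 < i.2 := fun i hi => by
    by_contra! hle
    simpa [ball_eq_empty.2 hle] using hS i hi
  obtain ⟨v, hvS, hdisj, hcover⟩ := exists_pairwiseDisjoint_biUnion_ball_subset S hpos
  calc c * μ.withDensity u (⋃ i ∈ S, ball i.1 i.2)
      ≤ c * ∑ i ∈ v, μ.withDensity u (ball i.1 (8 * i.2)) := by
        gcongr
        exact (measure_mono hcover).trans (measure_biUnion_finset_le v _)
    _ = ∑ i ∈ v, c * ∫⁻ y in ball i.1 (8 * i.2), u y ∂μ := by
        simp only [Finset.mul_sum, withDensity_apply u measurableSet_ball]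
    _ ≤ ∑ i ∈ v, K ^ 3 * ∫⁻ y in ball i.1 i.2, f y * maximalFunction μ u y ∂μ := by
        refine Finset.sum_le_sum fun i hi => ?_
        refine le_trans ?_ (hμ.setLAverage_mul_setLIntegral_ball_le f u i.1 i.2)
        gcongr
        exact (hS i (hvS hi)).le
    _ = K ^ 3 * ∫⁻ y in ⋃ i ∈ v, ball i.1 i.2, f y * maximalFunction μ u y ∂μ := by
        rw [← Finset.mul_sum,
          lintegral_biUnion_finset hdisj (fun _ _ => measurableSet_ball)]
    _ ≤ K ^ 3 * ∫⁻ y, f y * maximalFunction μ u y ∂μ := by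
        gcongr
        exact Measure.restrict_le_self

end Doubling

section WeightedInequalities

variable {X : Type*} [PseudoMetricSpace X] [SecondCountableTopology X] [MeasurableSpace X]
  [OpensMeasurableSpace X] {μ : Measure X} {K : ℝ≥0}

lemma IsDoubling.mul_withDensity_lt_maximalFunction_le (hμ : IsDoubling μ K) (f u : X → ℝ≥0∞)
    (c : ℝ≥0∞) :
    c * μ.withDensity u {x | c < maximalFunction μ f x} ≤
      K ^ 3 * ∫⁻ y, f y * maximalFunction μ u y ∂μ := by
  obtain ⟨T, hTI, hTc, hT⟩ := TopologicalSpace.isOpen_biUnion_countable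
    {i : X × ℝ | c < ⨍⁻ y in ball i.1 i.2, f y ∂μ} (fun i => ball i.1 i.2) fun _ _ => isOpen_ball
  have := hTc.to_subtype
  have hdir : Directed (· ⊆ ·) fun S : Finset T => ⋃ i ∈ S, ball (i : X × ℝ).1 (i : X × ℝ).2 :=
    directed_of_isDirected_le fun _ _ h => biUnion_subset_biUnion_left h
  rw [setOf_lt_maximalFunction, ← hT, biUnion_eq_iUnion, iUnion_eq_iUnion_finset,
    hdir.measure_iUnion, ENNReal.mul_iSup]
  refine iSup_le fun S => ?_
  simpa using hμ.mul_withDensity_biUnion_ball_le f u (S.map (Function.Embedding.subtype _))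
    (by simpa using fun a b hab _ => hTI hab)

lemma IsDoubling.mul_withDensity_lt_maximalFunction_le_withDensity (hμ : IsDoubling μ K)
    {f : X → ℝ≥0∞} (hf : Measurable f) (u : X → ℝ≥0∞) (c : ℝ≥0∞) :
    c * μ.withDensity u {x | c < maximalFunction μ f x} ≤
      2 * K ^ 3 * μ.withDensity (fun y => f y * maximalFunction μ u y) {x | c < 2 * f x} := by
  have hmeas : MeasurableSet {x | c < 2 * f x} := measurableSet_lt (by fun_prop) (by fun_prop)
  set h : X → ℝ≥0∞ := {x | c < 2 * f x}.indicator f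
  have hfh : f ≤ fun y => c / 2 + h y := fun y => by
    by_cases hy : c < 2 * f y
    · simp [h, hy]
    · rw [not_lt, mul_comm] at hy
      exact ((ENNReal.le_div_iff_mul_le (by simp) (by simp)).2 hy).trans le_self_add
  have hsub : {x | c < maximalFunction μ f x} ⊆ {x | c / 2 < maximalFunction μ h x} := by
    intro x hx
    have hadd : maximalFunction μ f x ≤ c / 2 + maximalFunction μ h x :=
      calc maximalFunction μ f x ≤ maximalFunction μ (fun y => c / 2 + h y) x :=
            maximalFunction_mono hfh x
        _ ≤ maximalFunction μ (fun _ => c / 2) x + maximalFunction μ h x :=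
            maximalFunction_add_le measurable_const h x
        _ ≤ c / 2 + maximalFunction μ h x := by
            gcongr
            exact maximalFunction_const_le μ _ x
    have hlt : c / 2 + c / 2 < c / 2 + maximalFunction μ h x := by
      rw [ENNReal.add_halves]
      exact lt_of_lt_of_le hx hadd
    exact lt_of_add_lt_add_left hlt
  calc c * μ.withDensity u {x | c < maximalFunction μ f x}
      ≤ 2 * (c / 2) * μ.withDensity u {x | c / 2 < maximalFunction μ h x} := by
        rw [ENNReal.mul_div_cancel two_ne_zero ENNReal.ofNat_ne_top]
        gcongr
    _ ≤ 2 * (K ^ 3 * ∫⁻ y, h y * maximalFunction μ u y ∂μ) := by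
        rw [mul_assoc]
        gcongr 2 * ?_
        exact hμ.mul_withDensity_lt_maximalFunction_le h u (c / 2)
    _ = _ := by
        rw [withDensity_apply _ hmeas, ← lintegral_indicator hmeas, mul_assoc]
        simp only [h, indicator_mul_left]

theorem IsDoubling.exists_lintegral_maximalFunction_rpow_mul_le (hμ : IsDoubling μ K) {r : ℝ}
    (hr : 1 < r) :
    ∃ C : ℝ≥0∞, C ≠ ∞ ∧ ∀ f u : X → ℝ≥0∞, Measurable f → Measurable u →
      ∫⁻ x, maximalFunction μ f x ^ r * u x ∂μ ≤
        C * ∫⁻ x, f x ^ r * maximalFunction μ u x ∂μ := by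
  have hr1 : 0 < r - 1 := sub_pos.2 hr
  refine ⟨2 * K ^ 3 * ENNReal.ofReal (r / (r - 1)) * 2 ^ (r - 1), by finiteness,
    fun f u hf hu => ?_⟩
  calc ∫⁻ x, maximalFunction μ f x ^ r * u x ∂μ
      = ∫⁻ x, maximalFunction μ f x ^ r ∂(μ.withDensity u) := by
        rw [lintegral_withDensity_eq_lintegral_mul _ hu (by fun_prop)]
        simp only [Pi.mul_apply, mul_comm]
    _ ≤ ((2 * K ^ 3 : ℝ≥0) : ℝ≥0∞) * ENNReal.ofReal (r / (r - 1)) *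
          ∫⁻ x, (2 * f x) ^ (r - 1) ∂(μ.withDensity fun y => f y * maximalFunction μ u y) := by
        refine lintegral_rpow_le_of_forall_ofReal_mul_meas_lt_le (by fun_prop) (by fun_prop) hr
          fun t _ => ?_
        push_cast
        exact hμ.mul_withDensity_lt_maximalFunction_le_withDensity hf u _
    _ = ((2 * K ^ 3 : ℝ≥0) : ℝ≥0∞) * ENNReal.ofReal (r / (r - 1)) *
          ∫⁻ x, 2 ^ (r - 1) * (f x ^ r * maximalFunction μ u x) ∂μ := by
        rw [lintegral_withDensity_eq_lintegral_mul _ (by fun_prop) (by fun_prop)]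
        congr 1
        refine lintegral_congr fun x => ?_
        have hpow : f x ^ r = f x * f x ^ (r - 1) := by
          conv_lhs => rw [← add_sub_cancel 1 r]
          rw [ENNReal.rpow_add_of_nonneg _ _ zero_le_one hr1.le, ENNReal.rpow_one]
        rw [Pi.mul_apply, ENNReal.mul_rpow_of_nonneg _ _ hr1.le, hpow]
        ring
    _ = _ := by
        rw [lintegral_const_mul _ (by fun_prop)]
        push_cast
        ring

lemma IsDoubling.exists_lintegral_maximalFunction_rpow_le (hμ : IsDoubling μ K) {r : ℝ}
    (hr : 1 < r) :
    ∃ C : ℝ≥0∞, C ≠ ∞ ∧ ∀ f : X → ℝ≥0∞, Measurable f →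
      ∫⁻ x, maximalFunction μ f x ^ r ∂μ ≤ C * ∫⁻ x, f x ^ r ∂μ := by
  obtain ⟨C, hC, hbound⟩ := hμ.exists_lintegral_maximalFunction_rpow_mul_le hr
  refine ⟨C, hC, fun f hf => ?_⟩
  calc ∫⁻ x, maximalFunction μ f x ^ r ∂μ = ∫⁻ x, maximalFunction μ f x ^ r * 1 ∂μ := by simp
    _ ≤ C * ∫⁻ x, f x ^ r * maximalFunction μ (fun _ => 1) x ∂μ := hbound f _ hf measurable_const
    _ ≤ C * ∫⁻ x, f x ^ r ∂μ := by
        gcongr with x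
        exact mul_le_of_le_one_right' (maximalFunction_const_le μ 1 x)

end WeightedInequalities

section VectorValued

lemma exists_le_rpow_mul_rpow_and_tsum_rpow_le {α ι : Type*} [MeasurableSpace α] [Countable ι]
    {f : ι → α → ℝ≥0∞} (hf : ∀ k, Measurable (f k)) {r θ : ℝ} (hr : 0 < r) (hθ : 0 < θ)
    (hθ1 : θ ≤ 1) :
    ∃ g : ι → α → ℝ≥0∞, (∀ k, Measurable (g k)) ∧
      (∀ k x, f k x ≤ g k x ^ θ * ((∑' j, f j x ^ r) ^ (1 / r)) ^ (1 - θ)) ∧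
      ∀ x, ∑' k, g k x ^ (r * θ) ≤ (∑' k, f k x ^ r) ^ θ := by
  set E : α → ℝ≥0∞ := fun x => ∑' j, f j x ^ r
  have hE : Measurable E := Measurable.tsum fun k => (hf k).pow_const r
  -- Where `E` is infinite the quotient can degenerate to `0`, while `∞` satisfies both bounds.
  refine ⟨fun k x => if E x = ∞ then ∞ else (f k x / (E x ^ (1 / r)) ^ (1 - θ)) ^ (1 / θ),
    fun k => Measurable.ite (hE (measurableSet_singleton ∞)) measurable_const (by fun_prop),
    fun k x => ?_, fun x => ?_⟩
  · change f k x ≤ (if E x = ∞ then ∞ else _) ^ θ * (E x ^ (1 / r)) ^ (1 - θ)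
    by_cases hx : E x = ∞
    · rcases hθ1.eq_or_lt with rfl | hlt <;> simp [*]
    rw [if_neg hx, one_div θ, ENNReal.rpow_inv_rpow hθ.ne']
    rcases eq_or_ne (E x) 0 with hx0 | hx0
    · have hfx : f k x = 0 := by
        simpa [hr.not_gt, hr] using ENNReal.tsum_eq_zero.1 hx0 k
      simp [hfx]
    · exact (ENNReal.div_mul_cancel (by simp [hx, hx0]) (by simp [hx, hx0])).ge
  · change _ ≤ E x ^ θ
    by_cases hx : E x = ∞
    · simp [hx, hθ]
    have hpow : ∀ k, ((f k x / (E x ^ (1 / r)) ^ (1 - θ)) ^ (1 / θ)) ^ (r * θ) =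
        f k x ^ r * (E x ^ (1 - θ))⁻¹ := fun k => by
      rw [← ENNReal.rpow_mul, show 1 / θ * (r * θ) = r by field_simp,
        ENNReal.div_rpow_of_nonneg _ _ hr.le, ← ENNReal.rpow_mul, ← ENNReal.rpow_mul,
        show 1 / r * ((1 - θ) * r) = 1 - θ by field_simp, div_eq_mul_inv]
    simp only [if_neg hx, hpow, ENNReal.tsum_mul_right]
    refine ENNReal.div_le_of_le_mul ?_
    rw [← ENNReal.rpow_add_of_nonneg _ _ hθ.le (sub_nonneg.2 hθ1), add_sub_cancel,
      ENNReal.rpow_one]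

variable {X ι : Type*} [PseudoMetricSpace X] [MeasurableSpace X] {μ : Measure X} {r θ : ℝ}

lemma rpow_tsum_maximalFunction_rpow_le {f g : ι → X → ℝ≥0∞} {W : X → ℝ≥0∞}
    (hg : ∀ k, Measurable (g k)) (hW : Measurable W) (hr : 0 ≤ r) (hθ : 0 ≤ θ) (hθ1 : θ ≤ 1)
    (h : ∀ k x, f k x ≤ g k x ^ θ * W x ^ (1 - θ)) (x : X) :
    (∑' k, maximalFunction μ (f k) x ^ r) ^ θ ≤
      (∑' k, maximalFunction μ (g k) x ^ (r * θ)) ^ θ *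
        (maximalFunction μ W x ^ (r * θ)) ^ (1 - θ) := by
  have hk : ∀ k, maximalFunction μ (f k) x ^ r ≤
      maximalFunction μ (g k) x ^ (r * θ) * maximalFunction μ W x ^ (r * (1 - θ)) := fun k => by
    rw [mul_comm r, mul_comm r, ENNReal.rpow_mul, ENNReal.rpow_mul,
      ← ENNReal.mul_rpow_of_nonneg _ _ hr]
    gcongr
    exact (maximalFunction_mono (h k) x).trans
      (maximalFunction_rpow_mul_rpow_le (hg k) hW hθ (sub_nonneg.2 hθ1) (add_sub_cancel _ _) x)
  calc (∑' k, maximalFunction μ (f k) x ^ r) ^ θ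
      ≤ ((∑' k, maximalFunction μ (g k) x ^ (r * θ)) *
          maximalFunction μ W x ^ (r * (1 - θ))) ^ θ := by
        rw [← ENNReal.tsum_mul_right]
        gcongr with k
        exact hk k
    _ = _ := by
        rw [ENNReal.mul_rpow_of_nonneg _ _ hθ, ← ENNReal.rpow_mul, ← ENNReal.rpow_mul,
          mul_right_comm]

variable [OpensMeasurableSpace X] [Countable ι]

lemma lintegral_tsum_maximalFunction_rpow_le {C : ℝ≥0∞}
    (hC : ∀ f : X → ℝ≥0∞, Measurable f →
      ∫⁻ x, maximalFunction μ f x ^ r ∂μ ≤ C * ∫⁻ x, f x ^ r ∂μ)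
    {f : ι → X → ℝ≥0∞} (hf : ∀ k, Measurable (f k)) :
    ∫⁻ x, ∑' k, maximalFunction μ (f k) x ^ r ∂μ ≤ C * ∫⁻ x, ∑' k, f k x ^ r ∂μ :=
  calc ∫⁻ x, ∑' k, maximalFunction μ (f k) x ^ r ∂μ
      = ∑' k, ∫⁻ x, maximalFunction μ (f k) x ^ r ∂μ := lintegral_tsum fun k => by fun_prop
    _ ≤ ∑' k, C * ∫⁻ x, f k x ^ r ∂μ := ENNReal.tsum_le_tsum fun k => hC (f k) (hf k)
    _ = C * ∫⁻ x, ∑' k, f k x ^ r ∂μ := by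
        rw [ENNReal.tsum_mul_left, lintegral_tsum fun k => by fun_prop]

variable [SecondCountableTopology X] {K : ℝ≥0}

lemma IsDoubling.exists_lintegral_tsum_maximalFunction_rpow_mul_le (hμ : IsDoubling μ K)
    (hr : 1 < r) :
    ∃ C : ℝ≥0∞, C ≠ ∞ ∧ ∀ (f : ι → X → ℝ≥0∞) (u : X → ℝ≥0∞), (∀ k, Measurable (f k)) →
      Measurable u → ∫⁻ x, (∑' k, maximalFunction μ (f k) x ^ r) * u x ∂μ ≤
        C * ∫⁻ x, (∑' k, f k x ^ r) * maximalFunction μ u x ∂μ := by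
  obtain ⟨C, hC, hbound⟩ := hμ.exists_lintegral_maximalFunction_rpow_mul_le hr
  refine ⟨C, hC, fun f u hf hu => ?_⟩
  calc ∫⁻ x, (∑' k, maximalFunction μ (f k) x ^ r) * u x ∂μ
      = ∑' k, ∫⁻ x, maximalFunction μ (f k) x ^ r * u x ∂μ := by
        simp only [← ENNReal.tsum_mul_right]
        exact lintegral_tsum fun k => by fun_prop
    _ ≤ ∑' k, C * ∫⁻ x, f k x ^ r * maximalFunction μ u x ∂μ :=
        ENNReal.tsum_le_tsum fun k => hbound (f k) u (hf k) hu
    _ = C * ∫⁻ x, (∑' k, f k x ^ r) * maximalFunction μ u x ∂μ := by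
        simp only [ENNReal.tsum_mul_left, ← ENNReal.tsum_mul_right]
        rw [lintegral_tsum fun k => by fun_prop]

lemma IsDoubling.exists_lintegral_tsum_maximalFunction_rpow_le_of_one_lt [SigmaFinite μ]
    (hμ : IsDoubling μ K) (hr : 1 < r) (hθ : 1 < θ) :
    ∃ C : ℝ≥0∞, C ≠ ∞ ∧ ∀ f : ι → X → ℝ≥0∞, (∀ k, Measurable (f k)) →
      ∫⁻ x, (∑' k, maximalFunction μ (f k) x ^ r) ^ θ ∂μ ≤ C * ∫⁻ x, (∑' k, f k x ^ r) ^ θ ∂μ := by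
  obtain ⟨θ', hconj⟩ : ∃ θ', θ.HolderConjugate θ' := ⟨_, .conjExponent hθ⟩
  obtain ⟨C₁, hC₁, hweighted⟩ :=
    hμ.exists_lintegral_tsum_maximalFunction_rpow_mul_le (ι := ι) hr
  obtain ⟨C₂, hC₂, hscalar⟩ := hμ.exists_lintegral_maximalFunction_rpow_le hconj.symm.lt
  have hθ'0 : 0 ≤ 1 / θ' := hconj.symm.one_div_nonneg
  refine ⟨(C₁ * C₂ ^ (1 / θ')) ^ θ, by finiteness, fun f hf => ?_⟩
  set E : X → ℝ≥0∞ := fun x => ∑' k, f k x ^ r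
  have hE : Measurable E := Measurable.tsum fun k => (hf k).pow_const r
  have hdual : ∀ u : X → ℝ≥0∞, Measurable u →
      ∫⁻ x, (∑' k, maximalFunction μ (f k) x ^ r) * u x ∂μ ≤
        C₁ * C₂ ^ (1 / θ') * (∫⁻ x, E x ^ θ ∂μ) ^ (1 / θ) * (∫⁻ x, u x ^ θ' ∂μ) ^ (1 / θ') := by
    intro u hu
    calc ∫⁻ x, (∑' k, maximalFunction μ (f k) x ^ r) * u x ∂μ
        ≤ C₁ * ∫⁻ x, E x * maximalFunction μ u x ∂μ := hweighted f u hf hu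
      _ ≤ C₁ * ((∫⁻ x, E x ^ θ ∂μ) ^ (1 / θ) *
            (∫⁻ x, maximalFunction μ u x ^ θ' ∂μ) ^ (1 / θ')) := by
          gcongr
          exact ENNReal.lintegral_mul_le_Lp_mul_Lq μ hconj hE.aemeasurable
            (measurable_maximalFunction μ u).aemeasurable
      _ ≤ C₁ * ((∫⁻ x, E x ^ θ ∂μ) ^ (1 / θ) * (C₂ * ∫⁻ x, u x ^ θ' ∂μ) ^ (1 / θ')) := by
          gcongr
          exact hscalar u hu
      _ = _ := by
          rw [ENNReal.mul_rpow_of_nonneg _ _ hθ'0]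
          ring
  refine (lintegral_rpow_le_of_forall_lintegral_mul_le hconj hdual).trans_eq ?_
  rw [ENNReal.mul_rpow_of_nonneg _ _ hconj.nonneg, one_div θ, ENNReal.rpow_inv_rpow hconj.ne_zero]

lemma IsDoubling.exists_lintegral_tsum_maximalFunction_rpow_le_of_le_one (hμ : IsDoubling μ K)
    (hθ : 0 < θ) (hθ1 : θ ≤ 1) (hrθ : 1 < r * θ) :
    ∃ C : ℝ≥0∞, C ≠ ∞ ∧ ∀ f : ι → X → ℝ≥0∞, (∀ k, Measurable (f k)) →
      ∫⁻ x, (∑' k, maximalFunction μ (f k) x ^ r) ^ θ ∂μ ≤ C * ∫⁻ x, (∑' k, f k x ^ r) ^ θ ∂μ := by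
  have hr : 0 < r := pos_of_mul_pos_left (one_pos.trans hrθ) hθ.le
  obtain ⟨C, hC, hscalar⟩ := hμ.exists_lintegral_maximalFunction_rpow_le hrθ
  refine ⟨C, hC, fun f hf => ?_⟩
  set W : X → ℝ≥0∞ := fun x => (∑' k, f k x ^ r) ^ (1 / r)
  have hW : Measurable W := (Measurable.tsum fun k => (hf k).pow_const r).pow_const _
  have hWpow : ∀ x, W x ^ (r * θ) = (∑' k, f k x ^ r) ^ θ := fun x => by
    rw [← ENNReal.rpow_mul, show 1 / r * (r * θ) = θ by field_simp]
  obtain ⟨g, hg, hfg, hgsum⟩ := exists_le_rpow_mul_rpow_and_tsum_rpow_le hf hr hθ hθ1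
  have hθ0 : 0 ≤ 1 - θ := sub_nonneg.2 hθ1
  have hdiag : ∫⁻ x, ∑' k, maximalFunction μ (g k) x ^ (r * θ) ∂μ ≤
      C * ∫⁻ x, (∑' k, f k x ^ r) ^ θ ∂μ :=
    (lintegral_tsum_maximalFunction_rpow_le hscalar hg).trans <| by
      gcongr with x
      exact hgsum x
  calc ∫⁻ x, (∑' k, maximalFunction μ (f k) x ^ r) ^ θ ∂μ
      ≤ ∫⁻ x, (∑' k, maximalFunction μ (g k) x ^ (r * θ)) ^ θ *
          (maximalFunction μ W x ^ (r * θ)) ^ (1 - θ) ∂μ :=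
        lintegral_mono (rpow_tsum_maximalFunction_rpow_le hg hW hr.le hθ.le hθ1 hfg)
    _ ≤ (∫⁻ x, ∑' k, maximalFunction μ (g k) x ^ (r * θ) ∂μ) ^ θ *
          (∫⁻ x, maximalFunction μ W x ^ (r * θ) ∂μ) ^ (1 - θ) :=
        ENNReal.lintegral_mul_norm_pow_le (by fun_prop) (by fun_prop) hθ.le hθ0
          (add_sub_cancel _ _)
    _ ≤ (C * ∫⁻ x, (∑' k, f k x ^ r) ^ θ ∂μ) ^ θ *
          (C * ∫⁻ x, (∑' k, f k x ^ r) ^ θ ∂μ) ^ (1 - θ) := by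
        gcongr
        simpa only [hWpow] using hscalar W hW
    _ = C * ∫⁻ x, (∑' k, f k x ^ r) ^ θ ∂μ := by
        rw [← ENNReal.rpow_add_of_nonneg _ _ hθ.le hθ0, add_sub_cancel, ENNReal.rpow_one]

theorem IsDoubling.exists_lintegral_tsum_maximalFunction_rpow_le [SigmaFinite μ]
    (hμ : IsDoubling μ K) (hr : 1 < r) (hrθ : 1 < r * θ) :
    ∃ C : ℝ≥0∞, C ≠ ∞ ∧ ∀ f : ι → X → ℝ≥0∞, (∀ k, Measurable (f k)) →
      ∫⁻ x, (∑' k, maximalFunction μ (f k) x ^ r) ^ θ ∂μ ≤ C * ∫⁻ x, (∑' k, f k x ^ r) ^ θ ∂μ := by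
  rcases lt_or_ge 1 θ with hθ | hθ
  · exact hμ.exists_lintegral_tsum_maximalFunction_rpow_le_of_one_lt hr hθ
  · exact hμ.exists_lintegral_tsum_maximalFunction_rpow_le_of_le_one
      (pos_of_mul_pos_right (one_pos.trans hrθ) (zero_le_one.trans hr.le)) hθ hrθ

end VectorValued

section UnitInterval

lemma setLAverage_Ioo_le_maximalFunction {a b x : ℝ} (f : ℝ → ℝ≥0∞) (hx : x ∈ Ioo a b) :
    ⨍⁻ t in Ioo a b, f t ∂volume ≤ maximalFunction volume f x := by
  rw [Real.Ioo_eq_ball] at hx ⊢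
  exact setLAverage_ball_le_maximalFunction hx

lemma ofReal_inv_mul_setIntegral_Ioo_le_setLAverage {a b : ℝ} (hab : a < b) {φ : ℝ → ℝ}
    (hφ : ∀ t, 0 ≤ φ t) :
    ENNReal.ofReal ((b - a)⁻¹ * ∫ t in Ioo a b, φ t) ≤
      ⨍⁻ t in Ioo a b, ENNReal.ofReal (φ t) ∂volume := by
  have hba : 0 < b - a := sub_pos.2 hab
  rw [setLAverage_eq, Real.volume_Ioo, ENNReal.div_eq_inv_mul,
    ENNReal.ofReal_mul (inv_nonneg.2 hba.le), ENNReal.ofReal_inv_of_pos hba]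
  gcongr
  calc ENNReal.ofReal (∫ t in Ioo a b, φ t)
      = ‖∫ t in Ioo a b, φ t‖ₑ := (Real.enorm_of_nonneg (integral_nonneg hφ)).symm
    _ ≤ ∫⁻ t in Ioo a b, ‖φ t‖ₑ := enorm_integral_le_lintegral_enorm _
    _ = ∫⁻ t in Ioo a b, ENNReal.ofReal (φ t) :=
        lintegral_congr fun t => Real.enorm_of_nonneg (hφ t)

/-- Equality can fail: the supremum of an unbounded set and the integral of a non-integrable power
are both `0` by convention. -/
lemma ofReal_MMq_le_maximalFunction_rpow {q : ℝ} (hq : 0 < q) (g : ℝ → ℝ) (x : ℝ) :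
    ENNReal.ofReal (MMq q g x) ≤
      maximalFunction volume ((Ioo 0 1).indicator fun t => ENNReal.ofReal |g t| ^ q) x ^
        (1 / q) := by
  set h : ℝ → ℝ≥0∞ := (Ioo 0 1).indicator fun t => ENNReal.ofReal |g t| ^ q with hh
  rcases eq_or_ne (maximalFunction volume h x ^ (1 / q)) ∞ with htop | htop
  · exact htop ▸ le_top
  refine ENNReal.ofReal_le_of_le_toReal (Real.sSup_le ?_ ENNReal.toReal_nonneg)
  rintro _ ⟨a, b, ha, hax, hxb, hb, rfl⟩
  rw [← ENNReal.ofReal_le_iff_le_toReal htop, ← ENNReal.ofReal_rpow_of_nonneg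
    (mul_nonneg (inv_nonneg.2 (by linarith)) (by positivity)) (by positivity)]
  gcongr
  calc ENNReal.ofReal ((b - a)⁻¹ * ∫ t in Ioo a b, |g t| ^ q)
      ≤ ⨍⁻ t in Ioo a b, ENNReal.ofReal (|g t| ^ q) ∂volume :=
        ofReal_inv_mul_setIntegral_Ioo_le_setLAverage (hax.trans hxb) fun t => by positivity
    _ = ⨍⁻ t in Ioo a b, h t ∂volume := by
        refine setLAverage_congr_fun measurableSet_Ioo fun t ht => ?_
        rw [hh, indicator_of_mem (Ioo_subset_Ioo ha hb ht),
          ENNReal.ofReal_rpow_of_nonneg (abs_nonneg _) hq.le]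
    _ ≤ maximalFunction volume h x := setLAverage_Ioo_le_maximalFunction h ⟨hax, hxb⟩

lemma lintegral_rpow_tsum_indicator_rpow {α ι : Type*} [MeasurableSpace α] {μ : Measure α}
    {A : Set α} (hA : MeasurableSet A) (F : ι → α → ℝ≥0∞) {r θ : ℝ} (hr : 0 < r) (hθ : 0 < θ) :
    ∫⁻ x, (∑' k, A.indicator (F k) x ^ r) ^ θ ∂μ = ∫⁻ x in A, (∑' k, F k x ^ r) ^ θ ∂μ := by
  rw [← lintegral_indicator hA]
  refine lintegral_congr fun x => ?_
  by_cases hx : x ∈ A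
  · simp only [indicator_of_mem hx]
  · simp [indicator_of_notMem hx, hr, hθ]

lemma exists_setLIntegral_rpow_tsum_MMq_le {ι : Type*} [Countable ι] {p q s : ℝ} (hq : 0 < q)
    (hqs : q < s) (hqp : q < p) :
    ∃ C : ℝ≥0∞, C ≠ ∞ ∧ ∀ g : ι → ℝ → ℝ, (∀ k, Measurable (g k)) →
      ∫⁻ x in Ioo (0 : ℝ) 1, (∑' k, ENNReal.ofReal (MMq q (g k) x) ^ s) ^ (p / s) ≤
        C * ∫⁻ x in Ioo (0 : ℝ) 1, (∑' k, ENNReal.ofReal |g k x| ^ s) ^ (p / s) := by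
  have hp : 0 < p := hq.trans hqp
  have hs : 0 < s := hq.trans hqs
  have hrθ : 1 < s / q * (p / s) := by
    rw [div_mul_div_cancel₀' hs.ne']
    exact (one_lt_div hq).2 hqp
  obtain ⟨C, hC, hbound⟩ :=
    (isDoubling_addHaar (E := ℝ) volume).exists_lintegral_tsum_maximalFunction_rpow_le (ι := ι)
      ((one_lt_div hq).2 hqs) hrθ
  refine ⟨C, hC, fun g hg => ?_⟩
  set f : ι → ℝ → ℝ≥0∞ := fun k => (Ioo 0 1).indicator fun t => ENNReal.ofReal |g k t| ^ q
  have hf : ∀ k, Measurable (f k) := fun k =>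
    Measurable.indicator (by have := hg k; fun_prop) measurableSet_Ioo
  have hMMq : ∀ k x, ENNReal.ofReal (MMq q (g k) x) ^ s ≤
      maximalFunction volume (f k) x ^ (s / q) := fun k x => by
    rw [← one_div_mul_eq_div, ENNReal.rpow_mul]
    gcongr
    exact ofReal_MMq_le_maximalFunction_rpow hq (g k) x
  calc ∫⁻ x in Ioo (0 : ℝ) 1, (∑' k, ENNReal.ofReal (MMq q (g k) x) ^ s) ^ (p / s)
      ≤ ∫⁻ x, (∑' k, maximalFunction volume (f k) x ^ (s / q)) ^ (p / s) := by
        refine lintegral_mono' Measure.restrict_le_self fun x => ?_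
        dsimp only
        gcongr with k
        exact hMMq k x
    _ ≤ C * ∫⁻ x, (∑' k, f k x ^ (s / q)) ^ (p / s) := hbound f hf
    _ = C * ∫⁻ x in Ioo (0 : ℝ) 1, (∑' k, ENNReal.ofReal |g k x| ^ s) ^ (p / s) := by
        rw [lintegral_rpow_tsum_indicator_rpow measurableSet_Ioo _ (by positivity)
          (by positivity)]
        simp only [← ENNReal.rpow_mul, mul_div_cancel₀ _ hq.ne']

theorem stmt11_general {ι : Type*} [Countable ι] {p q s : ℝ} (hq : 0 < q) (hqs : q < s)
    (hqp : q < p) :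
    ∃ C : ℝ, 0 < C ∧
      ∀ g : ι → ℝ → ℝ, (∀ k, Measurable (g k)) →
        (∫⁻ x in Ioo (0 : ℝ) 1,
            (∑' k, ENNReal.ofReal (MMq q (g k) x) ^ s) ^ (p / s)) ^ (1 / p) ≤
          ENNReal.ofReal C *
            (∫⁻ x in Ioo (0 : ℝ) 1,
              (∑' k, ENNReal.ofReal |g k x| ^ s) ^ (p / s)) ^ (1 / p) := by
  have hp : 0 ≤ 1 / p := one_div_nonneg.2 (hq.trans hqp).le
  obtain ⟨C, hC, hbound⟩ := exists_setLIntegral_rpow_tsum_MMq_le (ι := ι) hq hqs hqp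
  have hCp : C ^ (1 / p) ≠ ∞ := ENNReal.rpow_ne_top_of_nonneg hp hC
  refine ⟨(C ^ (1 / p)).toReal + 1, by positivity, fun g hg => ?_⟩
  refine (ENNReal.rpow_le_rpow (hbound g hg) hp).trans ?_
  rw [ENNReal.mul_rpow_of_nonneg _ _ hp]
  gcongr
  exact (ENNReal.le_ofReal_iff_toReal_le hCp (by positivity)).2 (by simp)

end UnitInterval

/-- Fefferman–Stein vector-valued maximal inequality on `[0,1)`. -/
theorem stmt11 (p q : ℝ) (hp : 1 < p) (hq1 : 1 ≤ q) (hq2 : q < 2) (hqp : q < p) :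
    ∃ C : ℝ, 0 < C ∧
      ∀ g : ℕ → ℝ → ℝ, (∀ k, Measurable (g k)) →
        (∫⁻ x in Set.Ioo (0:ℝ) 1,
            (∑' k : ℕ, (ENNReal.ofReal (MMq q (g k) x)) ^ 2) ^ (p / 2)) ^ (1 / p) ≤
          ENNReal.ofReal C *
            (∫⁻ x in Set.Ioo (0:ℝ) 1,
              (∑' k : ℕ, (ENNReal.ofReal |g k x|) ^ 2) ^ (p / 2)) ^ (1 / p) := by
  simpa only [ENNReal.rpow_two] using
    stmt11_general (ι := ℕ) (one_pos.trans_le hq1) hq2 hqp
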